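/- Let b ≥ 2 and let G be a connected graph on n vertices in which every block (maximal 2-connected subgraph, where an edge that is a bridge together with its endpoints also counts as a block) is a clique of order b. Then the Wiener index of G satisfies W(G) = (nb/2)·Σ_{i=1}^{n−1} 1/μ_i, where μ_1 ≥ μ_2 ≥ ⋯ ≥ μ_{n−1} > μ_n = 0 are the eigenvalues of the Laplacian matrix of G. -/

import Mathlib

open SimpleGraph Finset Polynomial

/-- The Wiener index of a graph `G`: half the sum of the distances between all ordered
pairs of vertices, i.e. the sum of distances over all unordered pairs. -/
noncomputable def wienerIndex {V : Type*} [Fintype V] (G : SimpleGraph V) : ℚ :=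
  (∑ u : V, ∑ v : V, (G.dist u v : ℚ)) / 2

/-- A set `B` of vertices of `G` is a *block* if the induced subgraph `G[B]` is connected
and has no cut vertex (so that `G[B]` is 2-connected, a single edge, or a single vertex),
and `B` is maximal with these properties. -/
def IsBlock {V : Type*} (G : SimpleGraph V) (B : Set V) : Prop :=
  (G.induce B).Connected ∧
  (∀ v ∈ B, (B \ {v}).Nonempty → (G.induce (B \ {v})).Connected) ∧
  ∀ C : Set V, B ⊆ C → (G.induce C).Connected →
    (∀ v ∈ C, (C \ {v}).Nonempty → (G.induce (C \ {v})).Connected) → B = C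

/-! Fix a vertex `v` of a connected graph whose blocks are cliques of order `b`, and let `u ≠ v`.
Every vertex of the block `B` through `u` on the way to `v` is at distance `d(u, v)` from `v`,
except the gate of `B`, which is one step closer, while the neighbours of `u` outside `B` are one
step farther. Summing `d(u, v) - d(x, v)` over the neighbours `x` of `u` gives `b - deg u`, so the
distance matrix `D` satisfies `L D = t 1ᵀ - b I` with `t u = b - deg u`, and therefore
`L D L = -b L`.

Let `s` be the sum of the entries of `D` and `J` the all-ones matrix. The matrix
`E = D - (s / n²) J` satisfies `L E L = -b L` too, and its quadratic form vanishes on the kernel of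
`L`, the constant vectors. Computing the trace of `E` in an orthonormal eigenbasis of `L` gives
`-s / n = -b ∑ 1 / μᵢ` over the nonzero eigenvalues. -/

open Matrix

section Blocks

variable {V : Type*} {G : SimpleGraph V} {B S T : Set V} {u v w x : V}

/-- `S` is a *nonseparable* set of vertices: the induced subgraph `G[S]` is connected and has no
cut vertex. Single vertices and edges count as nonseparable. -/
def IsNonseparable (G : SimpleGraph V) (S : Set V) : Prop :=
  (G.induce S).Connected ∧ ∀ v ∈ S, (S \ {v}).Nonempty → (G.induce (S \ {v})).Connected

lemma isBlock_iff_maximal_isNonseparable : IsBlock G B ↔ Maximal (IsNonseparable G) B :=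
  ⟨fun h => ⟨⟨h.1, h.2.1⟩, fun _ hC hBC => (h.2.2 _ hBC hC.1 hC.2).ge⟩,
    fun h => ⟨h.prop.1, h.prop.2, fun _ hBC h₁ h₂ => h.eq_of_subset ⟨h₁, h₂⟩ hBC⟩⟩

lemma IsNonseparable.exists_isBlock_superset [Finite V] (hS : IsNonseparable G S) :
    ∃ B, IsBlock G B ∧ S ⊆ B := by
  obtain ⟨B, hSB, hB⟩ := Finite.exists_le_maximal hS
  exact ⟨B, isBlock_iff_maximal_isNonseparable.2 hB, hSB⟩

lemma IsNonseparable.induce_diff_singleton_connected (hS : IsNonseparable G S)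
    (hnt : S.Nontrivial) (v : V) : (G.induce (S \ {v})).Connected := by
  by_cases hv : v ∈ S
  · obtain ⟨a, ha, hav⟩ := hnt.exists_ne v
    exact hS.2 v hv ⟨a, ha, hav⟩
  · rw [Set.sdiff_singleton_eq_self hv]
    exact hS.1

lemma IsNonseparable.union (hS : IsNonseparable G S) (hT : IsNonseparable G T)
    (hST : (S ∩ T).Nontrivial) : IsNonseparable G (S ∪ T) := by
  refine ⟨induce_union_connected hS.1.preconnected hT.1.preconnected hST.nonempty,
    fun v _ _ => ?_⟩
  obtain ⟨a, ⟨haS, haT⟩, hav⟩ := hST.exists_ne v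
  rw [Set.union_sdiff_distrib]
  exact induce_union_connected
    (hS.induce_diff_singleton_connected (hST.mono Set.inter_subset_left) v).preconnected
    (hT.induce_diff_singleton_connected (hST.mono Set.inter_subset_right) v).preconnected
    ⟨a, ⟨haS, hav⟩, haT, hav⟩

lemma IsBlock.subset_of_nontrivial_inter (hB : IsBlock G B) (hS : IsNonseparable G S)
    (hBS : (B ∩ S).Nontrivial) : S ⊆ B := by
  rw [isBlock_iff_maximal_isNonseparable] at hB
  exact Set.union_subset_iff.1 (hB.le_of_ge (hB.prop.union hS hBS) Set.subset_union_left) |>.2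

lemma isNonseparable_pair (h : G.Adj u v) : IsNonseparable G {u, v} := by
  refine ⟨induce_pair_connected_of_adj h, fun x hx hne => ?_⟩
  have hsub : (({u, v} : Set V) \ {x}).Subsingleton := by
    rintro a ⟨ha, hax⟩ c ⟨hc, hcx⟩
    simp only [Set.mem_insert_iff, Set.mem_singleton_iff] at *
    grind
  have := hsub.coe_sort
  have := hne.to_subtype
  exact ⟨Preconnected.of_subsingleton⟩

lemma induce_support_diff_singleton_connected_of_isCycle {c : G.Walk v v} (hc : c.IsCycle) :
    (G.induce ({x | x ∈ c.support} \ {v})).Connected := by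
  have htail : ¬c.tail.Nil := by
    have := hc.three_le_length
    rw [← Walk.length_eq_zero_iff, Walk.length_tail]
    omega
  have hsupp : c.support = v :: (c.tail.dropLast.support ++ [v]) := by
    rw [Walk.support_dropLast_concat htail, Walk.support_tail_of_not_nil c hc.not_nil,
      Walk.cons_tail_support]
  have hv : v ∉ c.tail.dropLast.support := by
    have := hc.support_nodup
    rw [hsupp] at this
    grind
  have hset : {x | x ∈ c.support} \ {v} = {x | x ∈ c.tail.dropLast.support} := by
    ext x
    simp only [hsupp]
    grind
  rw [hset]
  exact c.tail.dropLast.connected_induce_support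

lemma isNonseparable_support_of_isCycle {c : G.Walk v v} (hc : c.IsCycle) :
    IsNonseparable G {x | x ∈ c.support} := by
  classical
  refine ⟨c.connected_induce_support, fun x hx _ => ?_⟩
  have hrot : {y | y ∈ (c.rotate x hx).support} = {y | y ∈ c.support} := by
    ext y
    simp
  exact hrot ▸ induce_support_diff_singleton_connected_of_isCycle (hc.rotate hx)

lemma IsBlock.mem_of_walk (hB : IsBlock G B) (hu : u ∈ B) (hw : w ∈ B) (huw : G.Adj u w)
    (hux : G.Adj u x) (p : G.Walk x w) (hp : u ∉ p.support) : x ∈ B := by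
  classical
  by_cases hxw : x = w
  · exact hxw ▸ hw
  have hpath : (Walk.cons hux p.bypass).IsPath :=
    p.bypass_isPath.cons fun h => hp (p.support_bypass_subset_support h)
  have hlen : p.bypass.length ≠ 0 := fun h => hxw (Walk.eq_of_length_eq_zero h)
  have hcycle : (Walk.cons huw.symm (Walk.cons hux p.bypass)).IsCycle :=
    Walk.isCycle_iff_isPath_tail_and_le_length.2
      ⟨by simpa using hpath, by simp only [Walk.length_cons]; omega⟩
  exact hB.subset_of_nontrivial_inter (isNonseparable_support_of_isCycle hcycle)
    ⟨u, ⟨hu, by simp⟩, w, ⟨hw, by simp⟩, huw.ne⟩ (by simp)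

end Blocks

section Distances

variable {V : Type*} {G : SimpleGraph V} {B : Set V} {u v w w' x : V}

lemma exists_walk_notMem_support_of_dist_le (hxv : G.Reachable x v) (hux : u ≠ x)
    (h : G.dist x v ≤ G.dist u v) : ∃ p : G.Walk x v, u ∉ p.support := by
  classical
  obtain ⟨p, hp⟩ := hxv.exists_walk_length_eq_dist
  refine ⟨p, fun hu => ?_⟩
  have hsplit : (p.takeUntil u hu).length + (p.dropUntil u hu).length = p.length := by
    rw [← Walk.length_append, p.take_spec hu]
  have hdrop := dist_le (p.dropUntil u hu)
  have htake : (p.takeUntil u hu).length ≠ 0 := fun h => hux (Walk.eq_of_length_eq_zero h).symm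
  omega

lemma exists_adj_dist_eq_dist_add_one (h : G.Reachable u v) (huv : u ≠ v) :
    ∃ w, G.Adj u w ∧ G.dist u v = G.dist w v + 1 := by
  obtain ⟨p, hp⟩ := h.exists_walk_length_eq_dist
  cases p with
  | nil => exact absurd rfl huv
  | @cons _ w _ huw q =>
    refine ⟨w, huw, le_antisymm ?_ ?_⟩
    · have := huw.reachable.dist_triangle_left v
      rw [dist_eq_one_iff_adj.2 huw] at this
      omega
    · rw [← hp, Walk.length_cons]
      exact Nat.add_le_add_right (dist_le q) 1

lemma IsBlock.mem_of_dist_le (hB : IsBlock G B) (hG : G.Connected) (hu : u ∈ B) (hw : w ∈ B)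
    (huw : G.Adj u w) (hwv : G.dist w v ≤ G.dist u v) (hux : G.Adj u x)
    (hxv : G.dist x v ≤ G.dist u v) : x ∈ B := by
  obtain ⟨p, hp⟩ := exists_walk_notMem_support_of_dist_le (hG x v) hux.ne hxv
  obtain ⟨q, hq⟩ := exists_walk_notMem_support_of_dist_le (hG w v) huw.ne hwv
  exact hB.mem_of_walk hu hw huw hux (p.append q.reverse)
    (by simp [Walk.mem_support_append_iff, hp, hq])

/-- A *block graph*: every block is a clique. Connectedness is not part of the definition. -/
def IsBlockGraph (G : SimpleGraph V) : Prop :=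
  ∀ B, IsBlock G B → G.IsClique B

lemma IsBlockGraph.eq_of_dist_eq_dist_add_one [Finite V] (h : IsBlockGraph G) (hG : G.Connected)
    (hw : G.Adj u w) (hw' : G.Adj u w') (hd : G.dist u v = G.dist w v + 1)
    (hd' : G.dist u v = G.dist w' v + 1) : w = w' := by
  by_contra hne
  obtain ⟨B, hB, huwB⟩ := (isNonseparable_pair hw).exists_isBlock_superset
  obtain ⟨huB, hwB⟩ := Set.pair_subset_iff.1 huwB
  have hw'B : w' ∈ B := hB.mem_of_dist_le (v := v) hG huB hwB hw (by omega) hw' (by omega)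
  have hww' : G.Adj w w' := h B hB hwB hw'B hne
  have hwv : w ≠ v := by
    rintro rfl
    rw [SimpleGraph.dist_self] at hd
    exact hne (hG.dist_eq_zero_iff.1 (by omega)).symm
  obtain ⟨y, hwy, hy⟩ := exists_adj_dist_eq_dist_add_one (hG w v) hwv
  have hyB : y ∈ B := hB.mem_of_dist_le (v := v) hG hwB hw'B hww' (by omega) hwy (by omega)
  have huy : G.Adj u y := h B hB huB hyB (by rintro rfl; omega)
  have hshort := huy.reachable.dist_triangle_left v
  rw [dist_eq_one_iff_adj.2 huy] at hshort
  omega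

lemma IsBlockGraph.dist_sub_dist_eq [Finite V] [DecidableEq V] [DecidablePred (· ∈ B)]
    {R : Type*} [Ring R] (h : IsBlockGraph G) (hG : G.Connected) (hB : IsBlock G B) (hu : u ∈ B)
    (hw : w ∈ B) (huw : G.Adj u w) (hd : G.dist u v = G.dist w v + 1) (hux : G.Adj u x) :
    (G.dist u v : R) - G.dist x v =
      (if x = w then 1 else 0) + (if x ∈ B then 1 else 0) - 1 := by
  have hstep := hux.symm.diff_dist_adj (u := v)
  rw [G.dist_comm (u := v), G.dist_comm (u := v)] at hstep
  by_cases hxw : x = w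
  · simp [hxw, hw, hd]
  by_cases hxB : x ∈ B
  · have hxw_dist := (h B hB hxB hw hxw).symm.diff_dist_adj (u := v)
    rw [G.dist_comm (u := v), G.dist_comm (u := v)] at hxw_dist
    have hfar : G.dist u v ≠ G.dist x v + 1 := fun h' =>
      hxw (h.eq_of_dist_eq_dist_add_one hG hux huw h' hd)
    have heq : G.dist x v = G.dist u v := by omega
    simp [hxw, hxB, heq]
  · have hfar : ¬G.dist x v ≤ G.dist u v := fun h' =>
      hxB (hB.mem_of_dist_le hG hu hw huw (by omega) hux h')
    have heq : G.dist x v = G.dist u v + 1 := by omega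
    simp [hxw, hxB, heq]

end Distances

section DistMatrix

variable {V : Type*} [Fintype V] {G : SimpleGraph V} [DecidableRel G.Adj] {R : Type*} {b : ℕ}
  {u v : V}

lemma card_filter_neighborFinset_mem_add_one {B : Set V} [DecidablePred (· ∈ B)]
    (hB : G.IsClique B) (hu : u ∈ B) : #{x ∈ G.neighborFinset u | x ∈ B} + 1 = B.ncard := by
  have hset : B \ {u} = ({x ∈ G.neighborFinset u | x ∈ B} : Finset V) := by
    ext x
    simp only [Set.mem_sdiff, Set.mem_singleton_iff, coe_filter, Set.mem_ofPred_eq,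
      mem_neighborFinset]
    exact ⟨fun ⟨hxB, hxu⟩ => ⟨hB hu hxB (Ne.symm hxu), hxB⟩,
      fun ⟨hux, hxB⟩ => ⟨hxB, hux.ne'⟩⟩
  rw [← Set.ncard_sdiff_singleton_add_one hu B.toFinite, hset, Set.ncard_coe_finset]

/-- The distance matrix of `G`, with entries in `R`. As for `SimpleGraph.dist`, the entry of a pair
of vertices in different components is `0`. -/
noncomputable def distMatrix {V : Type*} (G : SimpleGraph V) (R : Type*) [NatCast R] :
    Matrix V V R :=
  Matrix.of fun u v => (G.dist u v : R)

variable [DecidableEq V]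

lemma lapMatrix_mul_distMatrix_apply [Ring R] (u v : V) :
    (G.lapMatrix R * distMatrix G R) u v =
      ∑ x ∈ G.neighborFinset u, ((G.dist u v : R) - G.dist x v) := by
  have h := G.lapMatrix_mulVec_apply u fun x => (G.dist x v : R)
  rw [Finset.sum_sub_distrib, Finset.sum_const, card_neighborFinset_eq_degree, nsmul_eq_mul]
  exact h

lemma lapMatrix_mul_distMatrix_apply_self [Ring R] (u : V) :
    (G.lapMatrix R * distMatrix G R) u u = -G.degree u := by
  have hnbr : ∀ x ∈ G.neighborFinset u, (G.dist u u : R) - G.dist x u = -1 := fun x hx => by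
    rw [mem_neighborFinset] at hx
    simp [dist_eq_one_iff_adj.2 hx.symm]
  rw [lapMatrix_mul_distMatrix_apply, Finset.sum_congr rfl hnbr]
  simp

lemma IsBlockGraph.lapMatrix_mul_distMatrix_apply_of_ne [Ring R] (h : IsBlockGraph G)
    (hG : G.Connected) (hcard : ∀ B, IsBlock G B → B.ncard = b) (huv : u ≠ v) :
    (G.lapMatrix R * distMatrix G R) u v = b - G.degree u := by
  classical
  obtain ⟨w, huw, hd⟩ := exists_adj_dist_eq_dist_add_one (hG u v) huv
  obtain ⟨B, hB, huwB⟩ := (isNonseparable_pair huw).exists_isBlock_superset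
  obtain ⟨huB, hwB⟩ := Set.pair_subset_iff.1 huwB
  have hw : w ∈ G.neighborFinset u := (G.mem_neighborFinset u w).2 huw
  rw [lapMatrix_mul_distMatrix_apply, Finset.sum_congr rfl fun x hx =>
      h.dist_sub_dist_eq hG hB huB hwB huw hd ((G.mem_neighborFinset u x).1 hx),
    Finset.sum_sub_distrib, Finset.sum_add_distrib, Finset.sum_ite_eq', if_pos hw,
    Finset.sum_boole, ← hcard B hB, ← card_filter_neighborFinset_mem_add_one (h B hB) huB]
  simp [add_comm]

lemma IsBlockGraph.lapMatrix_mul_distMatrix [CommRing R] (h : IsBlockGraph G)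
    (hG : G.Connected) (hcard : ∀ B, IsBlock G B → B.ncard = b) :
    G.lapMatrix R * distMatrix G R =
      vecMulVec (fun u => (b : R) - G.degree u) (fun _ => 1) - (b : R) • 1 := by
  ext u v
  by_cases huv : u = v
  · subst huv
    simp [lapMatrix_mul_distMatrix_apply_self, vecMulVec_apply]
  · simp [h.lapMatrix_mul_distMatrix_apply_of_ne hG hcard huv, vecMulVec_apply,
      one_apply_ne huv]

lemma one_vecMul_lapMatrix [CommRing R] : (fun _ => 1) ᵥ* G.lapMatrix R = 0 := by
  rw [← mulVec_transpose, (G.isSymm_lapMatrix (R := R)).eq]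
  exact G.lapMatrix_mulVec_const_eq_zero

lemma IsBlockGraph.lapMatrix_mul_distMatrix_mul_lapMatrix [CommRing R] (h : IsBlockGraph G)
    (hG : G.Connected) (hcard : ∀ B, IsBlock G B → B.ncard = b) :
    G.lapMatrix R * distMatrix G R * G.lapMatrix R = -(b : R) • G.lapMatrix R := by
  rw [h.lapMatrix_mul_distMatrix hG hcard, Matrix.sub_mul, vecMulVec_mul, one_vecMul_lapMatrix]
  simp

end DistMatrix

section Spectrum

variable {n : Type*} [Fintype n] {𝕜 : Type*} [RCLike 𝕜] {A E : Matrix n n 𝕜}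

lemma star_dotProduct_mulVec_eq_of_mul_mul_eq_smul (hA : A.IsHermitian) {c : 𝕜}
    (hE : A * E * A = c • A) {x : n → 𝕜} {r : ℝ} (hr : r ≠ 0) (hx : A *ᵥ x = r • x) :
    star x ⬝ᵥ E *ᵥ x = c * (r : 𝕜)⁻¹ * (star x ⬝ᵥ x) := by
  have hr' : (r : 𝕜) ≠ 0 := RCLike.ofReal_ne_zero.2 hr
  have hscaled : (r : 𝕜) * (r * (star x ⬝ᵥ E *ᵥ x)) = c * (r * (star x ⬝ᵥ x)) :=
    calc (r : 𝕜) * (r * (star x ⬝ᵥ E *ᵥ x))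
        = star (A *ᵥ x) ⬝ᵥ E *ᵥ (A *ᵥ x) := by
          simp [hx, mulVec_smul, RCLike.real_smul_eq_coe_mul]
      _ = star x ⬝ᵥ (A * E * A) *ᵥ x := by
          rw [star_mulVec, hA.eq, ← dotProduct_mulVec, mulVec_mulVec, mulVec_mulVec,
            Matrix.mul_assoc]
      _ = c * (r * (star x ⬝ᵥ x)) := by
          simp [hE, smul_mulVec, hx, RCLike.real_smul_eq_coe_mul]
  field_simp
  apply mul_left_cancel₀ hr'
  linear_combination hscaled

lemma trace_eq_sum_star_dotProduct_mulVec {ι : Type*} [Fintype ι] (E : Matrix n n 𝕜)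
    (v : OrthonormalBasis ι 𝕜 (EuclideanSpace 𝕜 n)) :
    E.trace = ∑ i, star ⇑(v i) ⬝ᵥ E *ᵥ ⇑(v i) := by
  classical
  have h := (toEuclideanLin E).trace_eq_sum_inner v
  rw [toEuclideanLin_eq_toLin_orthonormal, trace_toLin_eq] at h
  rw [h]
  refine Finset.sum_congr rfl fun i _ => ?_
  rw [← toEuclideanLin_eq_toLin_orthonormal, EuclideanSpace.inner_eq_star_dotProduct,
    dotProduct_comm]
  rfl

variable [DecidableEq n]

lemma trace_eq_mul_sum_inv_eigenvalues (hA : A.IsHermitian) {c : 𝕜} (hE : A * E * A = c • A)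
    (hker : ∀ x, A *ᵥ x = 0 → star x ⬝ᵥ E *ᵥ x = 0) :
    E.trace = c * ∑ i, (hA.eigenvalues i : 𝕜)⁻¹ := by
  rw [trace_eq_sum_star_dotProduct_mulVec E hA.eigenvectorBasis, Finset.mul_sum]
  refine Finset.sum_congr rfl fun i _ => ?_
  have heig := hA.mulVec_eigenvectorBasis i
  by_cases hi : hA.eigenvalues i = 0
  · rw [hker _ (by rw [heig, hi, zero_smul]), hi]
    simp
  · have hnorm : star ⇑(hA.eigenvectorBasis i) ⬝ᵥ ⇑(hA.eigenvectorBasis i) = 1 := by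
      rw [dotProduct_comm, ← EuclideanSpace.inner_eq_star_dotProduct]
      simp
    rw [star_dotProduct_mulVec_eq_of_mul_mul_eq_smul hA hE hi heig, hnorm, mul_one]

lemma eigenvalues₀_eq_of_charpoly_eq_prod (hA : A.IsHermitian) {μ : Fin (Fintype.card n) → ℝ}
    (hμ : Antitone μ) (h : A.charpoly = ∏ i, (X - C (μ i : 𝕜))) : hA.eigenvalues₀ = μ := by
  have hroots : A.charpoly.roots.map RCLike.re = (List.ofFn μ : Multiset ℝ) := by
    rw [h, roots_prod _ _ (Finset.prod_ne_zero_iff.2 fun i _ => X_sub_C_ne_zero _)]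
    simp [Multiset.bind_singleton, List.ofFn_eq_map, Function.comp_def]
  rw [← List.ofFn_inj, ← hA.sort_roots_charpoly_eq_eigenvalues₀, hroots, Multiset.coe_sort]
  apply List.mergeSort_of_pairwise
  simp_rw [decide_eq_true_eq, ← List.sortedGE_iff_pairwise]
  exact hμ.sortedGE_ofFn

open scoped ComplexOrder in
lemma eigenvalues₀_eq_zero_of_posSemidef_of_det_eq_zero (hA : A.PosSemidef) (hdet : A.det = 0)
    {i : Fin (Fintype.card n)} (hi : Fintype.card n ≤ i + 1) :
    hA.isHermitian.eigenvalues₀ i = 0 := by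
  have hnonneg : 0 ≤ hA.isHermitian.eigenvalues₀ i := by
    simpa [IsHermitian.eigenvalues] using
      hA.eigenvalues_nonneg (Fintype.equivOfCardEq (Fintype.card_fin _) i)
  obtain ⟨j, -, hj⟩ := Finset.prod_eq_zero_iff.1 (hA.isHermitian.det_eq_prod_eigenvalues ▸ hdet)
  refine le_antisymm ?_ hnonneg
  rw [← RCLike.ofReal_eq_zero.1 hj]
  exact hA.isHermitian.eigenvalues₀_antitone (by rw [Fin.le_def]; omega)

-- The discarded last term is `1 / 0 = 0`.
open scoped ComplexOrder in
lemma sum_inv_eigenvalues_of_posSemidef_of_det_eq_zero (hA : A.PosSemidef) (hdet : A.det = 0) :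
    ∑ i, (hA.isHermitian.eigenvalues i)⁻¹ =
      ∑ i ∈ Finset.univ.filter (fun i : Fin (Fintype.card n) => (i : ℕ) < Fintype.card n - 1),
        1 / hA.isHermitian.eigenvalues₀ i := by
  have hreindex : ∑ i, (hA.isHermitian.eigenvalues i)⁻¹ =
      ∑ i, (hA.isHermitian.eigenvalues₀ i)⁻¹ :=
    Equiv.sum_comp (Fintype.equivOfCardEq (Fintype.card_fin _)).symm
      fun i => (hA.isHermitian.eigenvalues₀ i)⁻¹
  simp only [one_div]
  rw [hreindex, Finset.sum_filter_of_ne]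
  intro i _ hi
  by_contra hlast
  exact hi (inv_eq_zero.2 (eigenvalues₀_eq_zero_of_posSemidef_of_det_eq_zero hA hdet (by omega)))

end Spectrum

lemma const_dotProduct_mulVec_const {n R : Type*} [Fintype n] [CommSemiring R] (a : R)
    (M : Matrix n n R) : (fun _ => a) ⬝ᵥ M *ᵥ (fun _ => a) = a ^ 2 * ∑ i, ∑ j, M i j := by
  simp only [dotProduct, mulVec, ← Finset.sum_mul, ← Finset.mul_sum]
  ring

lemma sum_sum_eq_of_lapMatrix_mul_mul {V : Type*} [Fintype V] [DecidableEq V]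
    {G : SimpleGraph V} [DecidableRel G.Adj] (hG : G.Connected) {D : Matrix V V ℝ} {c : ℝ}
    (hD : G.lapMatrix ℝ * D * G.lapMatrix ℝ = c • G.lapMatrix ℝ) :
    ∑ u, ∑ v, D u v = Fintype.card V *
      (D.trace - c * ∑ i, ((G.posSemidef_lapMatrix ℝ).isHermitian.eigenvalues i)⁻¹) := by
  have := hG.nonempty
  have hn : (Fintype.card V : ℝ) ≠ 0 := Nat.cast_ne_zero.2 Fintype.card_ne_zero
  set s := ∑ u, ∑ v, D u v with hs
  set E := D - (s / Fintype.card V ^ 2) • vecMulVec (fun _ => 1) (fun _ => 1) with hE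
  have hLEL : G.lapMatrix ℝ * E * G.lapMatrix ℝ = c • G.lapMatrix ℝ := by
    rw [hE, Matrix.mul_sub, Matrix.mul_smul, mul_vecMulVec, lapMatrix_mulVec_const_eq_zero,
      zero_vecMulVec, smul_zero, sub_zero, hD]
  have hsum : ∑ u, ∑ v, E u v = 0 := by
    simp only [hE, Matrix.sub_apply, Matrix.smul_apply, vecMulVec_apply, Finset.sum_sub_distrib,
      ← hs, mul_one, Finset.sum_const, Finset.card_univ, smul_eq_mul, nsmul_eq_mul]
    field_simp
    ring
  have hker : ∀ x, G.lapMatrix ℝ *ᵥ x = 0 → star x ⬝ᵥ E *ᵥ x = 0 := by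
    intro x hx
    obtain ⟨a, rfl⟩ : ∃ a, x = fun _ => a := ⟨x (Classical.arbitrary V), funext fun v =>
      G.lapMatrix_mulVec_eq_zero_iff_forall_reachable.1 hx _ _ (hG _ _)⟩
    rw [star_trivial, const_dotProduct_mulVec_const, hsum, mul_zero]
  have htrace : E.trace = D.trace - s / Fintype.card V := by
    rw [hE, trace_sub, trace_smul, trace_vecMulVec]
    simp only [dotProduct, mul_one, Finset.sum_const, Finset.card_univ, smul_eq_mul, nsmul_eq_mul]
    field_simp
  have h := trace_eq_mul_sum_inv_eigenvalues (G.posSemidef_lapMatrix ℝ).isHermitian hLEL hker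
  rw [htrace] at h
  simp only [RCLike.ofReal_real_eq_id, id] at h
  rw [← h]
  field_simp
  ring

/-- Let `G` be a connected graph on `n` vertices in which every block is a clique of order
`b ≥ 2`, and let `μ 0 ≥ μ 1 ≥ ⋯ ≥ μ (n-1) = 0` be the eigenvalues of the Laplacian matrix
of `G` (listed with multiplicity, in nonincreasing order). Then
`W(G) = (n b / 2) · ∑_{i=1}^{n-1} 1/μ_i`. -/
theorem wienerIndex_blockClique {V : Type*} [Fintype V] [DecidableEq V]
    (G : SimpleGraph V) [DecidableRel G.Adj] (hG : G.Connected) (b : ℕ) (hb : 2 ≤ b)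
    (hblocks : ∀ B : Set V, IsBlock G B → G.IsClique B ∧ B.ncard = b)
    (μ : Fin (Fintype.card V) → ℝ) (hmono : Antitone μ)
    (hμ : (G.lapMatrix ℝ).charpoly = ∏ i : Fin (Fintype.card V), (X - C (μ i))) :
    (wienerIndex G : ℝ) =
      ((Fintype.card V : ℝ) * b / 2) *
        ∑ i ∈ Finset.univ.filter (fun i : Fin (Fintype.card V) => (i : ℕ) < Fintype.card V - 1),
          1 / μ i := by
  have htrace : (distMatrix G ℝ).trace = 0 := by simp [Matrix.trace, distMatrix]
  have hLDL := IsBlockGraph.lapMatrix_mul_distMatrix_mul_lapMatrix (R := ℝ)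
    (fun B hB => (hblocks B hB).1) hG fun B hB => (hblocks B hB).2
  have hsum := sum_sum_eq_of_lapMatrix_mul_mul hG hLDL
  have := hG.nonempty
  have hdet : (G.lapMatrix ℝ).det = 0 := G.det_lapMatrix_eq_zero
  rw [htrace,
    sum_inv_eigenvalues_of_posSemidef_of_det_eq_zero (G.posSemidef_lapMatrix ℝ) hdet,
    eigenvalues₀_eq_of_charpoly_eq_prod _ hmono hμ] at hsum
  simp only [distMatrix, Matrix.of_apply] at hsum
  rw [wienerIndex]
  push_cast
  rw [hsum]
  ring
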